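/- Let f be ℝ-differentiable at a real point q ∈ ℝ ⊆ ℍ with continuous partials, satisfying ∂f/∂x = i ∂f/∂t, ∂f/∂y = j ∂f/∂t, ∂f/∂z = k ∂f/∂t at q. Then lim_{h→0} h⁻¹(f(q+h) - f(q) - h·(∂f/∂t)(q)) = 0, i.e., the total differential M_f h equals h·(∂f/∂t)(q) for all h ∈ ℍ. -/

import Mathlib

noncomputable section
open Quaternion Filter Topology

def qi : ℍ[ℝ] := ⟨0, 1, 0, 0⟩
def qj : ℍ[ℝ] := ⟨0, 0, 1, 0⟩
def qk : ℍ[ℝ] := ⟨0, 0, 0, 1⟩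

theorem apply_eq_smul_apply_one_of_span_eq_top {R A M : Type*} [CommSemiring R] [Semiring A]
    [Algebra R A] [AddCommMonoid M] [Module R M] [Module A M] [IsScalarTower R A M]
    {s : Set A} (hs : Submodule.span R s = ⊤) {L : A →ₗ[R] M}
    (hL : ∀ u ∈ s, L u = u • L 1) (a : A) : L a = a • L 1 :=
  LinearMap.congr_fun
    (LinearMap.ext_on hs hL : L = (LinearMap.toSpanSingleton A M (L 1)).restrictScalars R) a

theorem span_one_qi_qj_qk : Submodule.span ℝ {1, qi, qj, qk} = ⊤ := by
  refine Submodule.eq_top_iff'.mpr fun h => ?_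
  simp only [Submodule.mem_span_insert, Submodule.mem_span_singleton]
  refine ⟨h.re, _, ⟨h.imI, _, ⟨h.imJ, _, ⟨h.imK, rfl⟩, rfl⟩, rfl⟩, ?_⟩
  -- Unfolding `qi`, `qj`, `qk` any earlier blocks the projection lemmas for `•`, which do not
  -- match structure literals.
  ext <;>
    simp only [re_add, imI_add, imJ_add, imK_add, re_smul, imI_smul, imJ_smul, imK_smul] <;>
    simp [qi, qj, qk]

section NormedDivisionAlgebra

variable {𝕜 A E : Type*} [NontriviallyNormedField 𝕜] [NormedDivisionRing A] [NormedAlgebra 𝕜 A]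
  [NormedAddCommGroup E] [NormedSpace 𝕜 E] [Module A E] [NormSMulClass A E]

theorem hasFDerivAt_iff_tendsto_inv_smul {f : A → E} {L : A →L[𝕜] E} {q : A} :
    HasFDerivAt f L q ↔
      Tendsto (fun h => h⁻¹ • (f (q + h) - f q - L h)) (𝓝[≠] 0) (𝓝 0) := by
  set r : A → E := fun h => f (q + h) - f q - L h with hr
  have hr0 : r 0 = 0 := by simp [hr]
  have hnorm (h : A) : ‖h⁻¹ • r h‖ = ‖r h‖ / ‖h‖ := by
    rw [norm_smul, norm_inv, div_eq_inv_mul]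
  calc
    HasFDerivAt f L q ↔ r =o[𝓝 0] fun h => h := hasFDerivAt_iff_isLittleO_nhds_zero
    _ ↔ r =o[𝓝[≠] 0] fun h => h := by
      rw [← nhdsNE_sup_pure, Asymptotics.isLittleO_sup, Asymptotics.isLittleO_pure,
        and_iff_left hr0]
    _ ↔ Tendsto (fun h => ‖r h‖ / ‖h‖) (𝓝[≠] 0) (𝓝 0) := by
      rw [← Asymptotics.isLittleO_norm_norm, Asymptotics.isLittleO_iff_tendsto]
      simp +contextual [hr0]
    _ ↔ Tendsto (fun h => h⁻¹ • r h) (𝓝[≠] 0) (𝓝 0) := by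
      simp only [tendsto_zero_iff_norm_tendsto_zero (f := fun h => h⁻¹ • r h), hnorm]

theorem stmt_13_general [IsScalarTower 𝕜 A E] {s : Set A} (hs : Submodule.span 𝕜 s = ⊤)
    {f : A → E} {q : A} (hdiff : DifferentiableAt 𝕜 f q)
    (hf : ∀ u ∈ s, fderiv 𝕜 f q u = u • fderiv 𝕜 f q 1) :
    Tendsto (fun h => h⁻¹ • (f (q + h) - f q - h • fderiv 𝕜 f q 1)) (𝓝[≠] 0) (𝓝 0) ∧
      ∀ h, fderiv 𝕜 f q h = h • fderiv 𝕜 f q 1 := by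
  have hmul (h : A) : fderiv 𝕜 f q h = h • fderiv 𝕜 f q 1 :=
    apply_eq_smul_apply_one_of_span_eq_top hs (L := (fderiv 𝕜 f q).toLinearMap) hf h
  refine ⟨?_, hmul⟩
  simpa only [← hmul] using hasFDerivAt_iff_tendsto_inv_smul.mp hdiff.hasFDerivAt

end NormedDivisionAlgebra

theorem stmt_13 (f : ℍ[ℝ] → ℍ[ℝ]) (t : ℝ) (q : ℍ[ℝ]) (hq : q = (t : ℍ[ℝ]))
    (hdiff : DifferentiableAt ℝ f q)
    (hcont : ContinuousAt (fun p => fderiv ℝ f p) q)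
    (hx : fderiv ℝ f q qi = qi * fderiv ℝ f q 1)
    (hy : fderiv ℝ f q qj = qj * fderiv ℝ f q 1)
    (hz : fderiv ℝ f q qk = qk * fderiv ℝ f q 1) :
    Tendsto (fun h : ℍ[ℝ] => h⁻¹ * (f (q + h) - f q - h * fderiv ℝ f q 1))
      (𝓝[≠] 0) (𝓝 0) ∧
    ∀ h : ℍ[ℝ], fderiv ℝ f q h = h * fderiv ℝ f q 1 :=
  stmt_13_general span_one_qi_qj_qk hdiff (by simp [hx, hy, hz])
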